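/- arXiv:2410.05512 — 2 statements merged into one kernel-verified Lean document; each statement's English description precedes it below -/
import Mathlib

section
/- (Theorem 1, Dirichlet posterior of the Dirichlet-DSM.) Let U_1, …, U_n be i.i.d. uniform on [0,1], let x_1, …, x_n ∈ {1, …, K} be fixed labels with cell counts N_k = #{i : x_i = k} ≥ 1 for every k, and set Z_k = max{U_i : x_i = k}. Let S = {z ∈ ℝ^K : z_k > 0 for all k and Σ_{k=1}^K z_k < 1}. Then P(Σ_{k=1}^K Z_k < 1) > 0, and for every Borel set A ⊆ ℝ^K, the conditional probability satisfies P((Z_1, …, Z_K) ∈ A | Σ_{k=1}^K Z_k < 1) = (∫_{A ∩ S} ∏_{k=1}^K z_k^{N_k − 1} dz) / (∫_S ∏_{k=1}^K z_k^{N_k − 1} dz). In other words, conditionally on Σ_k Z_k < 1 the vector (1 − Σ_k Z_k, Z_1, …, Z_K) is Dirichlet(1, N_1, …, N_K) distributed. -/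
open MeasureTheory ProbabilityTheory

/-!
The event `Z k ≤ t k` for all `k` says that every observation of block `k` is at most `t k`. As the
blocks are disjoint, independence makes its probability the product over `k` of the `N k`-th powers
of the uniform distribution function at `t k`, so the `Z k` are independent with densities
`N k * z ^ (N k - 1)` on `(0, 1]`. The part of the cube `(0, 1]^K` where the coordinates sum to
less than `1` is exactly the simplex `S`; on the event `∑ k, Z k < 1` the law of `Z` therefore has
density `(∏ k, N k) * ∏ k, z k ^ (N k - 1)` on `S`, and the constant `∏ k, N k` cancels in the
conditional probability.
-/

section Pi

variable {ι : Type*} [Fintype ι]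

theorem lintegral_pi_prod_eq_prod_lintegral {X : ι → Type*} [∀ i, MeasurableSpace (X i)]
    (μ : ∀ i, Measure (X i)) [∀ i, SigmaFinite (μ i)] {f : ∀ i, X i → ENNReal}
    (hf : ∀ i, Measurable (f i)) :
    ∫⁻ z, ∏ i, f i (z i) ∂Measure.pi μ = ∏ i, ∫⁻ y, f i y ∂μ i := by
  classical
  rcases isEmpty_or_nonempty (∀ i, X i) with hX | ⟨⟨z⟩⟩
  · obtain ⟨i, hi⟩ := isEmpty_pi.mp hX
    rw [lintegral_of_isEmpty, Finset.prod_eq_zero (Finset.mem_univ i) (lintegral_of_isEmpty ..)]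
  suffices h : ∀ (s : Finset ι) (z : ∀ i, X i), (∫⋯∫⁻_s, (fun z => ∏ i, f i (z i)) ∂μ) z =
      (∏ i ∈ s, ∫⁻ y, f i y ∂μ i) * ∏ i ∈ sᶜ, f i (z i) by
    simpa using h Finset.univ z
  intro s
  induction s using Finset.induction with
  | empty => simp
  | insert i s hi ih =>
    intro z
    have hupdate (y : X i) : ∏ j ∈ sᶜ, f j (Function.update z i y j) =
        f i y * ∏ j ∈ (insert i s)ᶜ, f j (z j) := by
      rw [Finset.compl_insert, ← Finset.mul_prod_erase sᶜ _ (Finset.mem_compl.mpr hi),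
        Function.update_self]
      congr 1
      exact Finset.prod_congr rfl fun j hj => by
        rw [Function.update_of_ne (Finset.ne_of_mem_erase hj)]
    rw [lmarginal_insert _ (by fun_prop) hi]
    simp_rw [ih, hupdate]
    rw [lintegral_const_mul _ (by fun_prop), lintegral_mul_const _ (hf i),
      Finset.prod_insert hi]
    ring

theorem pi_withDensity {X : ι → Type*} [∀ i, MeasurableSpace (X i)]
    (μ : ∀ i, Measure (X i)) [∀ i, SigmaFinite (μ i)] {f : ∀ i, X i → ENNReal}
    (hf : ∀ i, Measurable (f i)) [∀ i, SigmaFinite ((μ i).withDensity (f i))] :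
    Measure.pi (fun i => (μ i).withDensity (f i)) =
      (Measure.pi μ).withDensity (fun z => ∏ i, f i (z i)) := by
  refine Measure.pi_eq fun s hs => ?_
  rw [withDensity_apply _ (.univ_pi hs), Measure.restrict_pi_pi,
    lintegral_pi_prod_eq_prod_lintegral _ hf]
  exact Finset.prod_congr rfl fun i _ => (withDensity_apply _ (hs i)).symm

theorem pi_eq_of_Iic {α : Type*} [LinearOrder α] [TopologicalSpace α] [OrderTopology α]
    [SecondCountableTopology α] [Nonempty α] [MeasurableSpace α] [BorelSpace α]
    {μ : ι → Measure α} [∀ i, IsFiniteMeasure (μ i)] {ν : Measure (ι → α)}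
    (h : ∀ t, ν (Set.Iic t) = ∏ i, μ i (Set.Iic (t i))) :
    Measure.pi μ = ν := by
  obtain ⟨u, hu⟩ := Filter.exists_seq_tendsto (Filter.atTop : Filter α)
  refine Measure.pi_eq_generateFrom (C := fun _ => Set.range Set.Iic)
    (fun _ => by rw [BorelSpace.measurable_eq (α := α), borel_eq_generateFrom_Iic])
    (fun _ => isPiSystem_Iic)
    (fun _ => ⟨fun j => Set.Iic (u j), fun j => ⟨_, rfl⟩, fun _ => measure_lt_top _ _, ?_⟩)
    fun s hs => ?_
  · exact Set.iUnion_eq_univ_iff.mpr fun a => (hu.eventually_ge_atTop a).exists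
  · choose t ht using hs
    obtain rfl : (fun i => Set.Iic (t i)) = s := funext ht
    rw [Set.pi_univ_Iic, h]

end Pi

section BlockMaxima

variable {Ω ι κ α : Type*} [MeasurableSpace Ω] {P : Measure Ω} [MeasurableSpace α]

theorem aemeasurable_sup' [SemilatticeSup α] [MeasurableSup₂ α] {U : ι → Ω → α} {s : Finset ι}
    (hs : s.Nonempty) (hU : ∀ i ∈ s, AEMeasurable (U i) P) :
    AEMeasurable (fun ω => s.sup' hs fun i => U i ω) P := by
  have h : AEMeasurable (s.sup' hs U) P :=
    Finset.sup'_induction hs U (p := (AEMeasurable · P)) (fun _ hf _ hg => hf.sup hg) hU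
  simpa only [← Finset.sup'_apply] using h

theorem measure_forall_sup'_le_eq_prod [SemilatticeSup α] [TopologicalSpace α]
    [ClosedIicTopology α] [OpensMeasurableSpace α] [Fintype κ] {U : ι → Ω → α}
    (hU : iIndepFun U P) {s : κ → Finset ι} (hdisj : Pairwise (Function.onFun Disjoint s))
    (hne : ∀ k, (s k).Nonempty) (t : κ → α) :
    P {ω | ∀ k, (s k).sup' (hne k) (fun i => U i ω) ≤ t k} =
      ∏ k, ∏ i ∈ s k, P {ω | U i ω ≤ t k} := by
  have hinj : Function.Injective (fun p : Σ k, s k => (p.2 : ι)) := by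
    rintro ⟨k, i, hi⟩ ⟨l, j, hj⟩ rfl
    obtain rfl : k = l := hdisj.eq (Finset.not_disjoint_iff.mpr ⟨_, hi, hj⟩)
    rfl
  calc P {ω | ∀ k, (s k).sup' (hne k) (fun i => U i ω) ≤ t k}
      = P (⋂ p : Σ k, s k, U p.2 ⁻¹' Set.Iic (t p.1)) := by
        congr 1
        ext ω
        simp [Sigma.forall]
    _ = ∏ p : Σ k, s k, P (U p.2 ⁻¹' Set.Iic (t p.1)) :=
        (hU.precomp hinj).meas_iInter fun p => ⟨Set.Iic (t p.1), measurableSet_Iic, rfl⟩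
    _ = ∏ k, ∏ i ∈ s k, P {ω | U i ω ≤ t k} := by
        rw [Fintype.prod_sigma]
        exact Finset.prod_congr rfl fun k _ =>
          Finset.prod_coe_sort (s k) fun i => P {ω | U i ω ≤ t k}

end BlockMaxima

theorem lintegral_Ioc_natCast_mul_pow {m : ℕ} (hm : m ≠ 0) (b : ℝ) :
    ∫⁻ z in Set.Ioc 0 b, m * ENNReal.ofReal (z ^ (m - 1)) = ENNReal.ofReal b ^ m := by
  rcases lt_or_ge b 0 with hb | hb
  · rw [Set.Ioc_eq_empty_of_le hb.le, ENNReal.ofReal_of_nonpos hb.le, zero_pow hm]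
    simp
  obtain ⟨m, rfl⟩ := Nat.exists_eq_succ_of_ne_zero hm
  have hpow : ∫⁻ z in Set.Ioc 0 b, ENNReal.ofReal (z ^ m) =
      ENNReal.ofReal (b ^ (m + 1) / (m + 1)) := by
    rw [← ofReal_integral_eq_lintegral_ofReal ((continuous_pow m).integrableOn_Ioc)
      ((ae_restrict_mem measurableSet_Ioc).mono fun z hz => pow_nonneg hz.1.le m),
      ← intervalIntegral.integral_of_le hb, integral_pow]
    simp
  rw [Nat.succ_sub_one, lintegral_const_mul _ (by fun_prop), hpow, ← ENNReal.ofReal_natCast,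
    ← ENNReal.ofReal_mul (Nat.cast_nonneg _), ← ENNReal.ofReal_pow hb]
  congr 1
  push_cast
  field_simp

/-- The law `Beta(m, 1)` of the maximum of `m ≠ 0` independent uniform variables on `[0, 1]`, given
by its density. The support is taken half-open, excluding the null set `{0}`, so that the product of
such laws lives on a cube whose part `∑ k, z k < 1` is the open simplex on the nose. -/
noncomputable def uniformMaxMeasure (m : ℕ) : Measure ℝ :=
  (volume.restrict (Set.Ioc 0 1)).withDensity fun z => m * ENNReal.ofReal (z ^ (m - 1))

theorem uniformMaxMeasure_Iic {m : ℕ} (hm : m ≠ 0) (t : ℝ) :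
    uniformMaxMeasure m (Set.Iic t) = volume.restrict (Set.Ioc 0 1) (Set.Iic t) ^ m := by
  have hinter : Set.Iic t ∩ Set.Ioc (0 : ℝ) 1 = Set.Ioc 0 (min 1 t) := by
    rw [Set.inter_comm, Set.Ioc_inter_Iic]
  rw [uniformMaxMeasure, withDensity_apply _ measurableSet_Iic,
    Measure.restrict_restrict measurableSet_Iic, Measure.restrict_apply measurableSet_Iic, hinter,
    lintegral_Ioc_natCast_mul_pow hm, Real.volume_Ioc, sub_zero]

theorem isProbabilityMeasure_uniformMaxMeasure {m : ℕ} (hm : m ≠ 0) :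
    IsProbabilityMeasure (uniformMaxMeasure m) where
  measure_univ := by
    rw [uniformMaxMeasure, withDensity_apply _ .univ, Measure.restrict_univ,
      lintegral_Ioc_natCast_mul_pow hm, ENNReal.ofReal_one, one_pow]

theorem hasLaw_sup'_of_uniform {Ω ι κ : Type*} [MeasurableSpace Ω] {P : Measure Ω} [Fintype κ]
    {U : ι → Ω → ℝ} (hindep : iIndepFun U P)
    (hunif : ∀ i, HasLaw (U i) (volume.restrict (Set.Icc 0 1)) P) {s : κ → Finset ι}
    (hdisj : Pairwise (Function.onFun Disjoint s)) (hne : ∀ k, (s k).Nonempty) :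
    HasLaw (fun ω k => (s k).sup' (hne k) fun i => U i ω)
      (Measure.pi fun k => uniformMaxMeasure (s k).card) P := by
  have hcard k : (s k).card ≠ 0 := (hne k).card_ne_zero
  have hprob k := isProbabilityMeasure_uniformMaxMeasure (hcard k)
  have hmeas : AEMeasurable (fun ω k => (s k).sup' (hne k) fun i => U i ω) P :=
    aemeasurable_pi_iff.mpr fun k => aemeasurable_sup' (hne k) fun i _ => (hunif i).aemeasurable
  have hcdf i (t : ℝ) : P {ω | U i ω ≤ t} = volume.restrict (Set.Ioc 0 1) (Set.Iic t) := by
    rw [restrict_Ioc_eq_restrict_Icc]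
    exact (hunif i).measure_eq measurableSet_Iic
  refine ⟨hmeas, (pi_eq_of_Iic fun t => ?_).symm⟩
  rw [Measure.map_apply_of_aemeasurable hmeas measurableSet_Iic]
  refine (measure_forall_sup'_le_eq_prod hindep hdisj hne t).trans ?_
  simp_rw [hcdf, Finset.prod_const, uniformMaxMeasure_Iic (hcard _)]

section Simplex

variable {κ : Type*} [Fintype κ]

variable (κ) in
/-- The open corner simplex: the vectors `(z_1, …, z_K)` for which `(1 - ∑ z_k, z_1, …, z_K)` is a
probability vector with positive entries. -/
def openCornerSimplex : Set (κ → ℝ) :=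
  {z | (∀ k, 0 < z k) ∧ ∑ k, z k < 1}

theorem isOpen_openCornerSimplex : IsOpen (openCornerSimplex κ) := by
  refine .and ?_ (isOpen_lt (by fun_prop) continuous_const)
  rw [Set.ofPred_forall]
  exact isOpen_iInter_of_finite fun k => isOpen_lt continuous_const (continuous_apply k)

theorem nonempty_openCornerSimplex : (openCornerSimplex κ).Nonempty := by
  refine ⟨fun _ => 1 / (Fintype.card κ + 1), fun _ => by positivity, ?_⟩
  rw [Finset.sum_const, Finset.card_univ, nsmul_eq_mul, mul_one_div, div_lt_one (by positivity)]
  exact lt_add_one _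

theorem sum_lt_one_inter_cube_eq_openCornerSimplex :
    {z : κ → ℝ | ∑ k, z k < 1} ∩ Set.univ.pi (fun _ => Set.Ioc 0 1) = openCornerSimplex κ := by
  ext z
  refine ⟨fun ⟨hsum, hcube⟩ => ⟨fun k => (hcube k trivial).1, hsum⟩,
    fun ⟨hpos, hsum⟩ => ⟨hsum, fun k _ => ⟨hpos k, ?_⟩⟩⟩
  exact (Finset.single_le_sum (fun j _ => (hpos j).le) (Finset.mem_univ k)).trans hsum.le

theorem setLIntegral_openCornerSimplex_prod_pow_pos (a : κ → ℕ) :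
    0 < ∫⁻ z in openCornerSimplex κ, ENNReal.ofReal (∏ k, z k ^ a k) := by
  rw [setLIntegral_pos_iff (by fun_prop)]
  refine (isOpen_openCornerSimplex.measure_pos volume nonempty_openCornerSimplex).trans_le
    (measure_mono fun z hz => ⟨?_, hz⟩)
  exact (ENNReal.ofReal_pos.mpr (Finset.prod_pos fun k _ => pow_pos (hz.1 k) _)).ne'

theorem pi_uniformMaxMeasure_inter_sum_lt_one {m : κ → ℕ} (hm : ∀ k, m k ≠ 0) {A : Set (κ → ℝ)}
    (hA : MeasurableSet A) :
    Measure.pi (fun k => uniformMaxMeasure (m k)) (A ∩ {z | ∑ k, z k < 1}) =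
      (∏ k, (m k : ENNReal)) *
        ∫⁻ z in A ∩ openCornerSimplex κ, ENNReal.ofReal (∏ k, z k ^ (m k - 1)) := by
  have hprob k := isProbabilityMeasure_uniformMaxMeasure (hm k)
  have hAsum : MeasurableSet (A ∩ {z : κ → ℝ | ∑ k, z k < 1}) :=
    hA.inter (measurableSet_lt (by fun_prop) measurable_const)
  unfold uniformMaxMeasure at hprob ⊢
  rw [pi_withDensity _ fun k => by fun_prop, withDensity_apply _ hAsum, ← Measure.restrict_pi_pi,
    Measure.restrict_restrict hAsum, Set.inter_assoc, sum_lt_one_inter_cube_eq_openCornerSimplex,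
    ← volume_pi, ← lintegral_const_mul _ (by fun_prop)]
  refine setLIntegral_congr_fun (hA.inter isOpen_openCornerSimplex.measurableSet) fun z hz => ?_
  rw [Finset.prod_mul_distrib,
    ENNReal.ofReal_prod_of_nonneg fun k _ => pow_nonneg (hz.2.1 k).le _]

end Simplex

theorem dirichlet_dsm_stmt2_general {Ω ι κ : Type*} [MeasurableSpace Ω] {P : Measure Ω}
    [Fintype κ] {U : ι → Ω → ℝ} (hindep : iIndepFun U P)
    (hunif : ∀ i, HasLaw (U i) (volume.restrict (Set.Icc 0 1)) P) {s : κ → Finset ι}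
    (hdisj : Pairwise (Function.onFun Disjoint s)) (hne : ∀ k, (s k).Nonempty) :
    0 < P {ω | ∑ k, (s k).sup' (hne k) (fun i => U i ω) < 1} ∧
      ∀ A : Set (κ → ℝ), MeasurableSet A →
        P ({ω | (fun k => (s k).sup' (hne k) fun i => U i ω) ∈ A} ∩
            {ω | ∑ k, (s k).sup' (hne k) (fun i => U i ω) < 1}) /
          P {ω | ∑ k, (s k).sup' (hne k) (fun i => U i ω) < 1} =
        (∫⁻ z in A ∩ openCornerSimplex κ, ENNReal.ofReal (∏ k, z k ^ ((s k).card - 1))) /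
          ∫⁻ z in openCornerSimplex κ, ENNReal.ofReal (∏ k, z k ^ ((s k).card - 1)) := by
  set Z : Ω → κ → ℝ := fun ω k => (s k).sup' (hne k) fun i => U i ω
  set C : ENNReal := ∏ k, ((s k).card : ENNReal)
  have hC : C ≠ 0 :=
    Finset.prod_ne_zero_iff.mpr fun k _ => Nat.cast_ne_zero.mpr (hne k).card_ne_zero
  have hC' : C ≠ ⊤ := ENNReal.prod_ne_top fun k _ => ENNReal.natCast_ne_top _
  have hjoint (A : Set (κ → ℝ)) (hA : MeasurableSet A) :
      P ({ω | Z ω ∈ A} ∩ {ω | ∑ k, Z ω k < 1}) =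
        C * ∫⁻ z in A ∩ openCornerSimplex κ, ENNReal.ofReal (∏ k, z k ^ ((s k).card - 1)) := by
    rw [← pi_uniformMaxMeasure_inter_sum_lt_one (fun k => (hne k).card_ne_zero) hA]
    exact (hasLaw_sup'_of_uniform hindep hunif hdisj hne).measure_eq
      (hA.inter (measurableSet_lt (by fun_prop) measurable_const))
  have htotal : P {ω | ∑ k, Z ω k < 1} =
      C * ∫⁻ z in openCornerSimplex κ, ENNReal.ofReal (∏ k, z k ^ ((s k).card - 1)) := by
    simpa using hjoint Set.univ .univ
  refine ⟨?_, fun A hA => ?_⟩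
  · rw [htotal]
    exact ENNReal.mul_pos hC (setLIntegral_openCornerSimplex_prod_pow_pos _).ne'
  · rw [hjoint A hA, htotal, ENNReal.mul_div_mul_left _ _ hC hC']

/-- Theorem 1, Dirichlet posterior of the Dirichlet-DSM: with `U i` i.i.d. uniform
on `[0,1]`, fixed labels with all cell counts `N k ≥ 1`, and `Z k = max {U i : x i = k}`, we have
`P(Σ Z k < 1) > 0`, and for every Borel set `A ⊆ ℝ^K`,
`P((Z 1,…,Z K) ∈ A ∣ Σ Z k < 1) = (∫_{A ∩ S} ∏ z k ^ (N k − 1) dz) / (∫_S ∏ z k ^ (N k − 1) dz)`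
where `S = {z : ∀ k, z k > 0 ∧ Σ z k < 1}`; i.e. conditionally on `Σ Z k < 1` the vector
`(1 − Σ Z k, Z 1, …, Z K)` is `Dirichlet(1, N 1, …, N K)`. -/
theorem dirichlet_dsm_stmt2
    {Ω : Type*} [MeasurableSpace Ω] (P : Measure Ω) [IsProbabilityMeasure P]
    {n K : ℕ} (U : Fin n → Ω → ℝ) (hUmeas : ∀ i, Measurable (U i))
    (hUindep : iIndepFun U P)
    (hUunif : ∀ i, Measure.map (U i) P = volume.restrict (Set.Icc (0 : ℝ) 1))
    (x : Fin n → Fin K)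
    (N : Fin K → ℕ) (hN : ∀ k, N k = (Finset.univ.filter (fun i => x i = k)).card)
    (hNpos : ∀ k, 1 ≤ N k)
    (hne : ∀ k, (Finset.univ.filter (fun i => x i = k)).Nonempty)
    (Z : Fin K → Ω → ℝ)
    (hZ : ∀ k ω, Z k ω = (Finset.univ.filter (fun i => x i = k)).sup' (hne k)
      (fun i => U i ω))
    (S : Set (Fin K → ℝ))
    (hS : S = {z | (∀ k, 0 < z k) ∧ ∑ k, z k < 1}) :
    0 < P {ω | ∑ k, Z k ω < 1} ∧
      ∀ A : Set (Fin K → ℝ), MeasurableSet A →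
        P ({ω | (fun k => Z k ω) ∈ A} ∩ {ω | ∑ k, Z k ω < 1}) / P {ω | ∑ k, Z k ω < 1} =
          (∫⁻ z in A ∩ S, ENNReal.ofReal (∏ k, z k ^ (N k - 1))) /
            (∫⁻ z in S, ENNReal.ofReal (∏ k, z k ^ (N k - 1))) := by
  have hdisj : Pairwise (Function.onFun Disjoint fun k => Finset.univ.filter fun i => x i = k) :=
    fun _ _ hkl => Finset.disjoint_filter.mpr fun _ _ hk hl => hkl (hk.symm.trans hl)
  simpa only [hN, hZ, hS, openCornerSimplex] using dirichlet_dsm_stmt2_general hUindep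
    (fun i => ⟨(hUmeas i).aemeasurable, hUunif i⟩) hdisj hne
end

section
/- (Theorem 2, neutrality of the Simplex-DSM.) Let K ≥ 2, let θ_1 ∈ (0,1), and let θ_2, …, θ_K be strictly positive reals with Σ_{j=2}^K θ_j = 1 − θ_1. Let Z_1, …, Z_K be i.i.d. Exp(1) random variables. Define A = Z_1 / ((1 − θ_1) · min_{2 ≤ j ≤ K} (Z_j/θ_j)) and B = A/(1 + A). Then P(A ≤ a) = a/(a + 1) for every a ≥ 0, and B is uniformly distributed on [0,1]: P(B ≤ b) = b for every b ∈ [0,1]. (B is the random lower endpoint of the Simplex-DSM posterior interval [B, 1) for θ_1 given the relative probabilities θ_{−1} and a single observation X = 1.) -/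
open MeasureTheory ProbabilityTheory

/-!
The exponential family is closed under scaling and under minima of independent variables, where the
rates add up; hence `(1 - θ 0) * min_{j ≠ 0} (Z j / θ j)` is again `Exp(1)`, whatever the weights.
So `A = X / Y` with `X`, `Y` i.i.d. exponential, and conditioning on `Y` reduces
`P(a * Y < X) = 1 / (a + 1)` to the Laplace transform of the exponential law. For `b < 1`, the
event `B ≤ b` is almost surely `A ≤ b / (1 - b)`.
-/

section ExponentialMeasure

variable {r : ℝ}

lemma expMeasure_Ioi (hr : 0 < r) {t : ℝ} (ht : 0 ≤ t) :
    expMeasure r (Set.Ioi t) = ENNReal.ofReal (Real.exp (-(r * t))) := by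
  have := isProbabilityMeasure_expMeasure hr
  rw [← Set.compl_Iic, prob_compl_eq_one_sub measurableSet_Iic, ← ofReal_cdf,
    cdf_expMeasure_eq hr, if_pos ht, ← ENNReal.ofReal_one,
    ← ENNReal.ofReal_sub _ (sub_nonneg.2 (Real.exp_le_one_iff.2 (by simpa using by positivity))),
    sub_sub_cancel]

lemma ae_pos_expMeasure (hr : 0 < r) : ∀ᵐ x ∂expMeasure r, 0 < x := by
  have := isProbabilityMeasure_expMeasure hr
  have hIic : expMeasure r (Set.Iic 0) = 0 := by
    rw [← ofReal_cdf, cdf_expMeasure_eq hr]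
    simp
  simpa [ae_iff, Set.Iic] using hIic

lemma lintegral_exp_neg_mul_expMeasure (hr : 0 < r) {s : ℝ} (hrs : 0 < r + s) :
    ∫⁻ x, ENNReal.ofReal (Real.exp (-(s * x))) ∂expMeasure r = ENNReal.ofReal (r / (r + s)) := by
  have hmeas (q : ℝ) : Measurable (exponentialPDF q) :=
    (measurable_exponentialPDFReal q).ennreal_ofReal
  have htilt (x : ℝ) : exponentialPDF r x * ENNReal.ofReal (Real.exp (-(s * x))) =
      ENNReal.ofReal (r / (r + s)) * exponentialPDF (r + s) x := by
    rcases lt_or_ge x 0 with hx | hx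
    · simp [exponentialPDF_of_neg hx]
    · rw [exponentialPDF_of_nonneg hx, exponentialPDF_of_nonneg hx,
        ← ENNReal.ofReal_mul (by positivity), ← ENNReal.ofReal_mul (by positivity), mul_assoc,
        ← Real.exp_add, ← mul_assoc, div_mul_cancel₀ _ hrs.ne', add_mul, neg_add]
  calc ∫⁻ x, ENNReal.ofReal (Real.exp (-(s * x))) ∂expMeasure r
      = ∫⁻ x, exponentialPDF r x * ENNReal.ofReal (Real.exp (-(s * x))) :=
        lintegral_withDensity_eq_lintegral_mul _ (hmeas r) (by fun_prop)
    _ = ENNReal.ofReal (r / (r + s)) := by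
        simp_rw [htilt]
        rw [lintegral_const_mul _ (hmeas _), lintegral_exponentialPDF_eq_one hrs, mul_one]

end ExponentialMeasure

section MinimumOfFamily

variable {Ω ι α β : Type*} [MeasurableSpace Ω] [MeasurableSpace α] [MeasurableSpace β]
  [SemilatticeInf β] [MeasurableInf₂ β] {P : Measure Ω} {S : Finset ι}

lemma aemeasurable_finset_inf' (hS : S.Nonempty) {f : ι → Ω → β}
    (hf : ∀ j ∈ S, AEMeasurable (f j) P) : AEMeasurable (fun ω ↦ S.inf' hS fun j ↦ f j ω) P := by
  simpa only [← Finset.inf'_apply] using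
    Finset.inf'_induction hS f (p := fun g ↦ AEMeasurable g P) (fun _ hu _ hv ↦ hu.inf hv) hf

lemma indepFun_finset_inf'_of_notMem (hS : S.Nonempty) {X : ι → Ω → α} (hindep : iIndepFun X P)
    (hX : ∀ j, AEMeasurable (X j) P) {k : ι} (hk : k ∉ S) {g : ι → α → β}
    (hg : ∀ j ∈ S, Measurable (g j)) :
    IndepFun (X k) (fun ω ↦ S.inf' hS fun j ↦ g j (X j ω)) P := by
  have hrestrict := hindep.indepFun_finset₀ {k} S (Finset.disjoint_singleton_left.2 hk) hX
  have hmin : Measurable (S.attach.inf' hS.attach fun j (x : S → α) ↦ g j (x j)) :=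
    Finset.inf'_induction _ _ (fun _ hu _ hv ↦ hu.inf hv) fun j _ ↦
      (hg j j.2).comp (measurable_pi_apply j)
  have hattach : (fun ω ↦ S.inf' hS fun j ↦ g j (X j ω)) =
      (S.attach.inf' hS.attach fun j (x : S → α) ↦ g j (x j)) ∘ fun ω (j : S) ↦ X j ω := by
    ext ω
    rw [Function.comp_apply, Finset.inf'_apply]
    exact eq_of_forall_le_iff fun c ↦ by simp
  rw [hattach]
  exact hrestrict.comp
    (measurable_pi_apply (⟨k, Finset.mem_singleton_self k⟩ : ({k} : Finset ι))) hmin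

end MinimumOfFamily

section ExponentialVariables

variable {Ω : Type*} [MeasurableSpace Ω] {P : Measure Ω} {X Y : Ω → ℝ} {r s : ℝ}

lemma hasLaw_expMeasure_iff [IsProbabilityMeasure P] (hr : 0 < r) (hX : AEMeasurable X P) :
    HasLaw X (expMeasure r) P ↔
      ∀ t, 0 ≤ t → P {ω | t < X ω} = ENNReal.ofReal (Real.exp (-(r * t))) := by
  have := isProbabilityMeasure_expMeasure hr
  have := Measure.isProbabilityMeasure_map hX
  refine ⟨fun h t ht ↦ (h.measure_eq measurableSet_Ioi).trans (expMeasure_Ioi hr ht),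
    fun htail ↦ ⟨hX, ?_⟩⟩
  have hIic {t : ℝ} (ht : 0 ≤ t) : P.map X (Set.Iic t) = expMeasure r (Set.Iic t) := by
    rw [← Set.compl_Ioi, prob_compl_eq_one_sub measurableSet_Ioi,
      prob_compl_eq_one_sub measurableSet_Ioi, expMeasure_Ioi hr ht,
      Measure.map_apply_of_aemeasurable hX measurableSet_Ioi]
    exact congrArg _ (htail t ht)
  have hIic0 : expMeasure r (Set.Iic 0) = 0 := by
    simpa [ae_iff, Set.Iic] using ae_pos_expMeasure hr
  refine Measure.ext_of_Iic _ _ fun t ↦ ?_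
  rcases le_total 0 t with ht | ht
  · exact hIic ht
  · have hsub := Set.Iic_subset_Iic.2 ht
    rw [measure_mono_null hsub ((hIic le_rfl).trans hIic0), measure_mono_null hsub hIic0]

lemma ae_pos_of_hasLaw_expMeasure (hr : 0 < r) (hX : HasLaw X (expMeasure r) P) :
    ∀ᵐ ω ∂P, 0 < X ω :=
  (hX.ae_iff (by fun_prop)).2 (ae_pos_expMeasure hr)

lemma hasLaw_const_mul_expMeasure (hr : 0 < r) (hX : HasLaw X (expMeasure r) P) {c : ℝ}
    (hc : 0 < c) : HasLaw (fun ω ↦ c * X ω) (expMeasure (r / c)) P := by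
  have := isProbabilityMeasure_expMeasure hr
  have := hX.isProbabilityMeasure
  refine (hasLaw_expMeasure_iff (by positivity) (by fun_prop)).2 fun t ht ↦ ?_
  simp_rw [← div_lt_iff₀' hc]
  rw [(hasLaw_expMeasure_iff hr hX.aemeasurable).1 hX _ (by positivity), mul_div_assoc',
    div_mul_eq_mul_div]

lemma hasLaw_finset_inf'_expMeasure {ι : Type*} {S : Finset ι} (hS : S.Nonempty)
    {X : ι → Ω → ℝ} (hindep : iIndepFun X P) {r : ι → ℝ} (hr : ∀ j ∈ S, 0 < r j)
    (hX : ∀ j ∈ S, HasLaw (X j) (expMeasure (r j)) P) :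
    HasLaw (fun ω ↦ S.inf' hS fun j ↦ X j ω) (expMeasure (∑ j ∈ S, r j)) P := by
  have := hindep.isProbabilityMeasure
  refine (hasLaw_expMeasure_iff (Finset.sum_pos hr hS)
    (aemeasurable_finset_inf' hS fun j hj ↦ (hX j hj).aemeasurable)).2 fun t ht ↦ ?_
  have hevent : {ω | t < S.inf' hS fun j ↦ X j ω} = ⋂ j ∈ S, X j ⁻¹' Set.Ioi t := by
    ext ω
    simp
  rw [hevent, hindep.measure_inter_preimage_eq_mul S fun _ _ ↦ measurableSet_Ioi,
    Finset.sum_mul, ← Finset.sum_neg_distrib, Real.exp_sum,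
    ENNReal.ofReal_prod_of_nonneg fun _ _ ↦ (Real.exp_pos _).le]
  exact Finset.prod_congr rfl fun j hj ↦
    (hasLaw_expMeasure_iff (hr j hj) (hX j hj).aemeasurable).1 (hX j hj) t ht

lemma measure_mul_lt_of_indepFun_expMeasure (hr : 0 < r) (hs : 0 < s)
    (hX : HasLaw X (expMeasure r) P) (hY : HasLaw Y (expMeasure s) P) (hXY : IndepFun X Y P)
    {a : ℝ} (ha : 0 ≤ a) :
    P {ω | a * Y ω < X ω} = ENNReal.ofReal (s / (s + r * a)) := by
  have := isProbabilityMeasure_expMeasure hr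
  have := isProbabilityMeasure_expMeasure hs
  have := hX.isProbabilityMeasure
  have hlt : MeasurableSet {p : ℝ × ℝ | a * p.1 < p.2} :=
    measurableSet_lt (by fun_prop) (by fun_prop)
  calc P {ω | a * Y ω < X ω}
      = (expMeasure s).prod (expMeasure r) {p | a * p.1 < p.2} :=
        ((indepFun_iff_hasLaw_prodMk_prod hY hX).1 hXY.symm).measure_eq hlt
    _ = ∫⁻ y, expMeasure r (Set.Ioi (a * y)) ∂expMeasure s := Measure.prod_apply hlt
    _ = ∫⁻ y, ENNReal.ofReal (Real.exp (-(r * a * y))) ∂expMeasure s := by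
        refine lintegral_congr_ae ?_
        filter_upwards [ae_pos_expMeasure hs] with y hy
        rw [expMeasure_Ioi hr (by positivity), mul_assoc]
    _ = ENNReal.ofReal (s / (s + r * a)) := lintegral_exp_neg_mul_expMeasure hs (by positivity)

lemma measure_div_le_of_indepFun_expMeasure (hr : 0 < r) (hs : 0 < s)
    (hX : HasLaw X (expMeasure r) P) (hY : HasLaw Y (expMeasure s) P) (hXY : IndepFun X Y P)
    {a : ℝ} (ha : 0 ≤ a) :
    P {ω | X ω / Y ω ≤ a} = ENNReal.ofReal (r * a / (s + r * a)) := by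
  have := isProbabilityMeasure_expMeasure hr
  have := hX.isProbabilityMeasure
  have hlt : NullMeasurableSet {ω | a * Y ω < X ω} P :=
    nullMeasurableSet_lt (hY.aemeasurable.const_mul a) hX.aemeasurable
  have hevent : {ω | X ω / Y ω ≤ a} =ᵐ[P] ({ω | a * Y ω < X ω}ᶜ : Set Ω) := by
    filter_upwards [ae_pos_of_hasLaw_expMeasure hs hY] with ω hω
    exact propext ((div_le_iff₀ hω).trans not_lt.symm)
  rw [measure_congr hevent, prob_compl_eq_one_sub₀ hlt,
    measure_mul_lt_of_indepFun_expMeasure hr hs hX hY hXY ha, ← ENNReal.ofReal_one,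
    ← ENNReal.ofReal_sub _ (by positivity), one_sub_div (by positivity), add_sub_cancel_left]

lemma measure_div_one_add_le_of_cdf [IsProbabilityMeasure P] {A : Ω → ℝ}
    (hA : ∀ a, 0 ≤ a → P {ω | A ω ≤ a} = ENNReal.ofReal (a / (a + 1))) {b : ℝ}
    (hb : b ∈ Set.Icc (0 : ℝ) 1) :
    P {ω | A ω / (1 + A ω) ≤ b} = ENNReal.ofReal b := by
  have hpos : ∀ᵐ ω ∂P, 0 < A ω := by simpa [ae_iff] using hA 0 le_rfl
  rcases hb.2.eq_or_lt with rfl | hb1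
  · have hle : ∀ᵐ ω ∂P, A ω / (1 + A ω) ≤ 1 := by
      filter_upwards [hpos] with ω hω
      exact div_le_one_of_le₀ (by linarith) (by positivity)
    rw [measure_congr (Filter.eventuallyEq_univ.2 hle), measure_univ, ENNReal.ofReal_one]
  · have h1b : 0 < 1 - b := sub_pos.2 hb1
    have hevent : {ω | A ω / (1 + A ω) ≤ b} =ᵐ[P] {ω | A ω ≤ b / (1 - b)} := by
      filter_upwards [hpos] with ω hω
      refine propext (?_ : A ω / (1 + A ω) ≤ b ↔ A ω ≤ b / (1 - b))
      rw [div_le_iff₀ (by positivity), le_div_iff₀ h1b]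
      constructor <;> intro h <;> linarith
    rw [measure_congr hevent, hA _ (div_nonneg hb.1 h1b.le), div_add_one h1b.ne',
      add_sub_cancel, div_div_div_cancel_right₀ h1b.ne', div_one]

end ExponentialVariables

section WeightedMinimum

variable {Ω ι : Type*} [MeasurableSpace Ω] {P : Measure Ω} {r : ℝ} {Z : ι → Ω → ℝ}
  {θ : ι → ℝ} {S : Finset ι}

lemma hasLaw_sum_mul_inf'_div_expMeasure (hr : 0 < r) (hindep : iIndepFun Z P)
    (hlaw : ∀ j ∈ S, HasLaw (Z j) (expMeasure r) P) (hθ : ∀ j ∈ S, 0 < θ j) (hS : S.Nonempty) :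
    HasLaw (fun ω ↦ (∑ j ∈ S, θ j) * S.inf' hS fun j ↦ Z j ω / θ j) (expMeasure r) P := by
  have hsum : 0 < ∑ j ∈ S, θ j := Finset.sum_pos hθ hS
  have hscaled (j) (hj : j ∈ S) : HasLaw (fun ω ↦ Z j ω / θ j) (expMeasure (r * θ j)) P := by
    simpa only [div_eq_inv_mul, div_inv_eq_mul, inv_inv, mul_comm] using
      hasLaw_const_mul_expMeasure hr (hlaw j hj) (inv_pos.2 (hθ j hj))
  have hmin := hasLaw_finset_inf'_expMeasure hS
    (hindep.comp (fun j x ↦ x / θ j) fun _ ↦ measurable_id.div_const _)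
    (fun j hj ↦ mul_pos hr (hθ j hj)) hscaled
  rw [← Finset.mul_sum] at hmin
  simpa only [Function.comp_apply, mul_div_cancel_right₀ _ hsum.ne'] using
    hasLaw_const_mul_expMeasure (mul_pos hr hsum) hmin hsum

theorem dirichlet_dsm_stmt8_general (hr : 0 < r) (hindep : iIndepFun Z P)
    (hlaw : ∀ j, HasLaw (Z j) (expMeasure r) P) (hθ : ∀ j ∈ S, 0 < θ j) (hS : S.Nonempty)
    {k : ι} (hk : k ∉ S) {A B : Ω → ℝ}
    (hA : ∀ ω, A ω = Z k ω / ((∑ j ∈ S, θ j) * S.inf' hS fun j ↦ Z j ω / θ j))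
    (hB : ∀ ω, B ω = A ω / (1 + A ω)) :
    (∀ a : ℝ, 0 ≤ a → P {ω | A ω ≤ a} = ENNReal.ofReal (a / (a + 1))) ∧
      (∀ b ∈ Set.Icc (0 : ℝ) 1, P {ω | B ω ≤ b} = ENNReal.ofReal b) := by
  have := hindep.isProbabilityMeasure
  have hY := hasLaw_sum_mul_inf'_div_expMeasure hr hindep (fun j _ ↦ hlaw j) hθ hS
  have hXY : IndepFun (Z k) (fun ω ↦ (∑ j ∈ S, θ j) * S.inf' hS fun j ↦ Z j ω / θ j) P :=
    (indepFun_finset_inf'_of_notMem hS hindep (fun j ↦ (hlaw j).aemeasurable) hk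
      (g := fun j x ↦ x / θ j) fun _ _ ↦ measurable_id.div_const _).comp
      measurable_id (measurable_const_mul _)
  have hAcdf (a : ℝ) (ha : 0 ≤ a) : P {ω | A ω ≤ a} = ENNReal.ofReal (a / (a + 1)) := by
    simp_rw [hA]
    rw [measure_div_le_of_indepFun_expMeasure hr hr (hlaw k) hY hXY ha, ← mul_one_add,
      mul_div_mul_left _ _ hr.ne', add_comm]
  refine ⟨hAcdf, fun b hb ↦ ?_⟩
  simp_rw [hB]
  exact measure_div_one_add_le_of_cdf hAcdf hb

end WeightedMinimum

/-- Theorem 2, neutrality of the Simplex-DSM: with `K ≥ 2`, `θ 0 ∈ (0,1)`,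
`θ j > 0` for `j ≠ 0` summing to `1 − θ 0`, and `Z 0, …, Z (K−1)` i.i.d. `Exp(1)`, the variable
`A = Z 0 / ((1 − θ 0) · min_{j ≠ 0} (Z j / θ j))` satisfies `P(A ≤ a) = a/(a+1)` for `a ≥ 0`,
and `B = A / (1 + A)` is uniform on `[0,1]`. -/
theorem dirichlet_dsm_stmt8
    {Ω : Type*} [MeasurableSpace Ω] (P : Measure Ω) [IsProbabilityMeasure P]
    {K : ℕ} (hK : 2 ≤ K)
    (Z : Fin K → Ω → ℝ) (hZmeas : ∀ j, Measurable (Z j))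
    (hindep : iIndepFun Z P)
    (hlaw : ∀ j, Measure.map (Z j) P = expMeasure 1)
    (θ : Fin K → ℝ) (k0 : Fin K) (hk0 : k0 = ⟨0, by omega⟩)
    (hθ0 : θ k0 ∈ Set.Ioo (0 : ℝ) 1)
    (hθpos : ∀ j, j ≠ k0 → 0 < θ j)
    (hθsum : ∑ j ∈ Finset.univ.erase k0, θ j = 1 - θ k0)
    (hne : (Finset.univ.erase k0).Nonempty)
    (A B : Ω → ℝ)
    (hA : ∀ ω, A ω = Z k0 ω /
      ((1 - θ k0) * (Finset.univ.erase k0).inf' hne (fun j => Z j ω / θ j)))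
    (hB : ∀ ω, B ω = A ω / (1 + A ω)) :
    (∀ a : ℝ, 0 ≤ a → P {ω | A ω ≤ a} = ENNReal.ofReal (a / (a + 1))) ∧
      (∀ b ∈ Set.Icc (0 : ℝ) 1, P {ω | B ω ≤ b} = ENNReal.ofReal b) := by
  exact dirichlet_dsm_stmt8_general one_pos hindep (fun j ↦ ⟨(hZmeas j).aemeasurable, hlaw j⟩)
    (fun j hj ↦ hθpos j (Finset.ne_of_mem_erase hj)) hne (Finset.notMem_erase k0 Finset.univ)
    (by simpa only [hθsum] using hA) hB
end
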